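/- arXiv:math/0703546 — 2 statements merged into one kernel-verified Lean document; each statement's English description precedes it below -/
import Mathlib

section
/- The inverse of the generalized quantum Hilbert matrix H_n^{(α)}(q) = ([α]_q/[l+j+α]_q)_{0≤l,j≤n} has (l,j)-entry (−1)^{l+j} ([l+j+α]_q/[α]_q) (n+l+α choose n−j)_q (n+j+α choose n−l)_q (l+j+α−1 choose l)_q (l+j+α−1 choose j)_q; in particular H_n^{(α)}(q) is invertible. -/
noncomputable def qint (s : ℂ) (m : ℕ) : ℂ := (s ^ m - s⁻¹ ^ m) / (s - s⁻¹)

noncomputable def qbinom (s : ℂ) (m k : ℕ) : ℂ :=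
  ∏ j ∈ Finset.range k, qint s (m - j) / qint s (j + 1)

/-!
The quantum Hilbert matrix is a Cauchy matrix in disguise. The bracket `β a b = [a - b]_q` on the
integers satisfies the three-term Plücker relation, just as `x - y` does on a field, and this
relation alone gives Lagrange interpolation: a product of `n` factors `β (p k) z` is determined by
its values at `n + 1` nodes `z = r j`. Interpolating `∏ (m ≠ i), β (p m) z` at the nodes `r j` and
evaluating at `z = p k`, where it vanishes unless `k = i`, is the statement that the Cauchy matrix
`1 / β (p i) (r j)` has an explicit inverse. For `p i = i` and `r j = -(j + α)` the products in that
inverse are quotients of quantum factorials, which regroup into quantum binomial coefficients.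
-/

open Finset

theorem prod_univ_erase_eq_prod_range_erase {M : Type*} [CommMonoid M] {N : ℕ} (k : Fin N)
    (f : ℕ → M) : ∏ m ∈ univ.erase k, f m = ∏ m ∈ (range N).erase k, f m := by
  rw [← Nat.Iio_eq_range, ← Fin.map_valEmbedding_univ, ← Fin.valEmbedding_apply, ← map_erase,
    prod_map]

section Plucker

variable {X R K ι κ : Type*}

/-- The three-term Plücker relation, satisfied by `x - y` and by 2 × 2 minors. It is the
hypothesis under which Lagrange interpolation and the inversion of Cauchy matrices are carried
out. -/
def IsPlucker [CommRing R] (β : X → X → R) : Prop :=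
  ∀ x y z w, β x y * β z w - β x z * β y w + β x w * β y z = 0

theorem IsPlucker.self [CommRing R] [IsReduced R] {β : X → X → R} (hβ : IsPlucker β) (x : X) :
    β x x = 0 :=
  pow_eq_zero_iff two_ne_zero |>.mp (by linear_combination hβ x x x x)

theorem IsPlucker.swap [CommRing R] [IsReduced R] {β : X → X → R} (hβ : IsPlucker β) (x y : X) :
    β y x = -β x y := by
  have hsq : (β x y + β y x) ^ 2 = 0 := by
    linear_combination hβ x y x y + hβ y x y x + 2 * β y y * hβ.self x
  linear_combination pow_eq_zero_iff two_ne_zero |>.mp hsq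

variable [Field K] [DecidableEq ι]

/-- The Lagrange basis function attached to the node `r j` among the nodes `r m`, `m ∈ S`, with the
bracket `β x y` in place of the difference `x - y`. -/
def pluckerBasis (β : X → X → K) (r : ι → X) (S : Finset ι) (j : ι) (z : X) : K :=
  ∏ m ∈ S.erase j, β z (r m) / β (r j) (r m)

variable {β : X → X → K} {r : ι → X} {S : Finset ι} {a j : ι}

theorem pluckerBasis_insert_self (ha : a ∉ S) (z : X) :
    pluckerBasis β r (insert a S) a z = ∏ m ∈ S, β z (r m) / β (r a) (r m) := by
  rw [pluckerBasis, erase_insert ha]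

theorem pluckerBasis_insert_of_ne (ha : a ∉ S) (haj : a ≠ j) (z : X) :
    pluckerBasis β r (insert a S) j z =
      β z (r a) / β (r j) (r a) * pluckerBasis β r S j z := by
  rw [pluckerBasis, erase_insert_of_ne haj,
    prod_insert fun h => ha (mem_of_mem_erase h), pluckerBasis]

theorem pluckerBasis_mul_prod (hj : j ∈ S) {x : X} (hx : ∀ m ∈ S, β x (r m) ≠ 0) (z : X) :
    pluckerBasis β r S j x * ∏ m ∈ S, β z (r m) / β x (r m) =
      β z (r j) / β x (r j) * pluckerBasis β r S j z := by
  rw [← mul_prod_erase S _ hj, mul_left_comm]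
  congr 1
  rw [pluckerBasis, pluckerBasis, ← prod_mul_distrib]
  refine prod_congr rfl fun m hm => ?_
  have := hx m (mem_of_mem_erase hm)
  field_simp

theorem IsPlucker.prod_eq_sum_pluckerBasis (hβ : IsPlucker β) (p : κ → X) (T : Finset κ)
    (hr : (S : Set ι).Pairwise fun i j => β (r i) (r j) ≠ 0) (hcard : #S = #T + 1) (z : X) :
    ∏ k ∈ T, β (p k) z =
      ∑ j ∈ S, (∏ k ∈ T, β (p k) (r j)) * pluckerBasis β r S j z := by
  induction T using Finset.cons_induction generalizing S z with
  | empty =>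
    obtain ⟨j, rfl⟩ := card_eq_one.mp hcard
    simp [pluckerBasis]
  | cons k T hk ih =>
    obtain ⟨a, S, ha, rfl, hS⟩ := card_eq_succ.mp hcard
    rw [card_cons] at hS
    have hr' : (S : Set ι).Pairwise fun i j => β (r i) (r j) ≠ 0 :=
      hr.mono (by simp)
    have hne (j : ι) (hj : j ∈ S) : a ≠ j := fun h => ha (h ▸ hj)
    have haj (j : ι) (hj : j ∈ S) : β (r a) (r j) ≠ 0 :=
      hr (mem_insert_self a S) (mem_insert_of_mem hj) (hne j hj)
    -- Summed over `j ∈ S`, the first term on the right is the induction hypothesis at `r a`.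
    have basis_split (j : ι) (hj : j ∈ S) :
        β (p k) z * pluckerBasis β r S j z =
          β (p k) (r a) * (pluckerBasis β r S j (r a) * ∏ m ∈ S, β z (r m) / β (r a) (r m)) +
            β (p k) (r j) * pluckerBasis β r (insert a S) j z := by
      have := haj j hj
      rw [pluckerBasis_mul_prod hj haj, pluckerBasis_insert_of_ne ha (hne j hj),
        hβ.swap (r a) (r j)]
      field_simp
      linear_combination pluckerBasis β r S j z * hβ (p k) z (r a) (r j)
    simp only [prod_cons]
    rw [sum_insert ha, pluckerBasis_insert_self ha, ih hr' hS z, ih hr' hS (r a), mul_sum, mul_sum,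
      sum_mul, ← sum_add_distrib]
    refine sum_congr rfl fun j hj => ?_
    linear_combination (∏ k ∈ T, β (p k) (r j)) * basis_split j hj

theorem IsPlucker.cauchy_mul_inv_eq_one [Fintype ι] (hβ : IsPlucker β) {p : ι → X}
    (hpr : ∀ i j, β (p i) (r j) ≠ 0) (hp : Pairwise fun i j => β (p i) (p j) ≠ 0)
    (hr : Pairwise fun i j => β (r i) (r j) ≠ 0) :
    (Matrix.of fun i j => (β (p i) (r j))⁻¹ : Matrix ι ι K) *
      (Matrix.of fun j k => (∏ m, β (p m) (r j)) * (∏ m, β (p k) (r m)) /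
        (β (p k) (r j) * (∏ m ∈ univ.erase j, β (r j) (r m)) *
          ∏ m ∈ univ.erase k, β (p m) (p k))) = 1 := by
  ext i k
  have hcard : #(univ : Finset ι) = #(univ.erase i) + 1 :=
    (card_erase_add_one (mem_univ i)).symm
  have hD : ∏ m ∈ univ.erase k, β (p m) (p k) ≠ 0 :=
    prod_ne_zero_iff.mpr fun m hm => hp (ne_of_mem_erase hm)
  have interpolation :=
    hβ.prod_eq_sum_pluckerBasis p (univ.erase i) (fun _ _ _ _ h => hr h) hcard (p k)
  calc
    _ = ∑ j, (∏ m ∈ univ.erase i, β (p m) (r j)) * pluckerBasis β r univ j (p k) /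
          ∏ m ∈ univ.erase k, β (p m) (p k) := by
      simp only [Matrix.mul_apply, Matrix.of_apply]
      refine sum_congr rfl fun j _ => ?_
      rw [pluckerBasis, prod_div_distrib, ← mul_prod_erase univ _ (mem_univ i),
        ← mul_prod_erase univ (fun m => β (p k) (r m)) (mem_univ j)]
      have hi := hpr i j
      have hk := hpr k j
      field_simp
    _ = (∏ m ∈ univ.erase i, β (p m) (p k)) / ∏ m ∈ univ.erase k, β (p m) (p k) := by
      rw [interpolation, sum_div]
    _ = (1 : Matrix ι ι K) i k := by
      rcases eq_or_ne i k with rfl | hik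
      · rw [div_self hD, Matrix.one_apply_eq]
      · rw [prod_eq_zero (mem_erase.mpr ⟨hik.symm, mem_univ k⟩) (hβ.self (p k)), zero_div,
          Matrix.one_apply_ne hik]

end Plucker

section Quantum

variable {K : Type*} [Field K] {s : K}

/-- The quantum integer `[m]_q`, with `s = q ^ (1 / 2)`. Allowing negative `m` makes
`[a - b]_q` a bracket on `ℤ`. -/
def qNumber (s : K) (m : ℤ) : K := (s ^ m - s ^ (-m)) / (s - s⁻¹)

/-- The quantum factorial `[m]_q! = [1]_q ⋯ [m]_q`. -/
def qFactorial (s : K) (m : ℕ) : K := ∏ i ∈ range m, qNumber s ((i + 1 : ℕ) : ℤ)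

/-- The quantum binomial coefficient. The truncated subtraction is harmless: for `k > m` the factor
at `j = m` vanishes, as it would with integer subtraction. -/
def qChoose (s : K) (m k : ℕ) : K :=
  ∏ j ∈ range k, qNumber s ((m - j : ℕ) : ℤ) / qNumber s ((j + 1 : ℕ) : ℤ)

theorem qNumber_neg (s : K) (m : ℤ) : qNumber s (-m) = -qNumber s m := by
  rw [qNumber, qNumber, neg_neg, ← neg_div, neg_sub]

theorem qNumber_ne_zero (hs : s ≠ 0) (hs2 : s ^ 2 ≠ 1) {m : ℕ} (hm : (s ^ 2) ^ m ≠ 1) :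
    qNumber s m ≠ 0 := by
  have sub_inv_ne_zero {x : K} (hx : x ≠ 0) (hx2 : x ^ 2 ≠ 1) : x - x⁻¹ ≠ 0 := fun h =>
    hx2 (by rw [sq, ← mul_inv_cancel₀ hx, ← sub_eq_zero.mp h])
  rw [qNumber, zpow_neg, zpow_natCast]
  exact div_ne_zero (sub_inv_ne_zero (pow_ne_zero m hs) (by rwa [pow_right_comm]))
    (sub_inv_ne_zero hs hs2)

theorem qNumber_sub_ne_zero {N : ℕ} (hq : ∀ m : ℕ, 1 ≤ m → m ≤ N → qNumber s m ≠ 0) {i j : ℕ}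
    (hi : i ≤ N) (hj : j ≤ N) (hij : i ≠ j) : qNumber s ((i : ℤ) - j) ≠ 0 := by
  wlog h : j ≤ i generalizing i j
  · rw [← neg_sub, qNumber_neg]
    exact neg_ne_zero.mpr (this hj hi hij.symm (by omega))
  · rw [← Nat.cast_sub h]
    exact hq _ (by omega) (by omega)

theorem isPlucker_qNumber_sub (hs : s ≠ 0) : IsPlucker fun a b : ℤ => qNumber s (a - b) := by
  intro a b c d
  simp only [qNumber, neg_sub, zpow_sub₀ hs]
  field_simp
  ring

theorem qFactorial_succ (s : K) (m : ℕ) :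
    qFactorial s (m + 1) = qFactorial s m * qNumber s ((m + 1 : ℕ) : ℤ) :=
  prod_range_succ _ _

theorem qFactorial_add (s : K) (a b : ℕ) :
    qFactorial s (a + b) = qFactorial s a * ∏ i ∈ range b, qNumber s ((a + i + 1 : ℕ) : ℤ) :=
  prod_range_add _ _ _

theorem qFactorial_ne_zero {N m : ℕ} (hq : ∀ i : ℕ, 1 ≤ i → i ≤ N → qNumber s i ≠ 0)
    (hm : m ≤ N) : qFactorial s m ≠ 0 :=
  prod_ne_zero_iff.mpr fun i hi => hq (i + 1) (by omega) (by have := mem_range.mp hi; omega)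

theorem qChoose_add_right {a : ℕ} (ha : qFactorial s a ≠ 0) (b : ℕ) :
    qChoose s (a + b) b = qFactorial s (a + b) / (qFactorial s a * qFactorial s b) := by
  rw [qFactorial_add, mul_div_mul_left _ _ ha, qChoose, prod_div_distrib, qFactorial,
    ← prod_range_reflect]
  congr 1
  refine prod_congr rfl fun i hi => ?_
  have := mem_range.mp hi
  congr 2
  omega

theorem prod_range_qNumber_sub (s : K) (k : ℕ) :
    ∏ m ∈ range k, qNumber s ((m : ℤ) - k) = (-1) ^ k * qFactorial s k := by
  calc
    _ = ∏ i ∈ range k, -qNumber s ((i + 1 : ℕ) : ℤ) := by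
      rw [← prod_range_reflect]
      refine prod_congr rfl fun i hi => ?_
      have := mem_range.mp hi
      rw [← qNumber_neg]
      congr 1
      omega
    _ = (-1) ^ k * qFactorial s k := by
      rw [prod_neg, card_range, qFactorial]

theorem prod_erase_qNumber_sub (s : K) (k a : ℕ) :
    ∏ m ∈ (range (k + a + 1)).erase k, qNumber s ((m : ℤ) - k) =
      (-1) ^ k * (qFactorial s k * qFactorial s a) := by
  induction a with
  | zero =>
    rw [add_zero, range_add_one, erase_insert notMem_range_self, prod_range_qNumber_sub]
    simp [qFactorial]
  | succ a ih =>
    rw [range_add_one, erase_insert_of_ne (by omega), prod_insert (by simp), ← add_assoc, ih,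
      qFactorial_succ]
    push_cast
    ring_nf

/-- The weights `w` for which the inverse of `(1 / [l + j + α]_q)` has entries
`w l * w j / [l + j + α]_q`. They are meant for `1 ≤ α` and `k ≤ n`. -/
def qHilbertWeight (s : K) (n α k : ℕ) : K :=
  (-1) ^ k * (qFactorial s (n + k + α) /
    (qFactorial s (k + α - 1) * (qFactorial s k * qFactorial s (n - k))))

variable {n α : ℕ}

theorem prod_div_prod_erase_eq_qHilbertWeight (hα : 1 ≤ α) (k : Fin (n + 1))
    (hk : qFactorial s (k + α - 1) ≠ 0) :
    (∏ m : Fin (n + 1), qNumber s ((m + k + α : ℕ) : ℤ)) /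
        ∏ m ∈ univ.erase k, qNumber s ((m : ℤ) - (k : ℕ)) =
      qHilbertWeight s n α k := by
  have hnum : qFactorial s (n + k + α) = qFactorial s (k + α - 1) *
      ∏ m : Fin (n + 1), qNumber s ((m + k + α : ℕ) : ℤ) := by
    rw [show n + k + α = (k + α - 1) + (n + 1) by omega, qFactorial_add,
      ← Fin.prod_univ_eq_prod_range]
    refine congrArg _ (prod_congr rfl fun m _ => ?_)
    congr 2
    omega
  have hden : ∏ m ∈ univ.erase k, qNumber s ((m : ℤ) - (k : ℕ)) =
      (-1) ^ (k : ℕ) * (qFactorial s k * qFactorial s (n - k)) := by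
    rw [prod_univ_erase_eq_prod_range_erase k fun m => qNumber s ((m : ℤ) - (k : ℕ)),
      ← prod_erase_qNumber_sub, Nat.add_sub_cancel' k.is_le]
  rw [hden, qHilbertWeight, hnum, mul_div_mul_left _ _ hk, div_mul_eq_div_div_swap, div_eq_mul_inv,
    ← inv_pow, inv_neg_one, mul_comm]

theorem qHilbert_mul_inv_eq_one (hs : s ≠ 0) (hα : 1 ≤ α)
    (hq : ∀ m : ℕ, 1 ≤ m → m ≤ 2 * n + α → qNumber s m ≠ 0) :
    (Matrix.of fun l j : Fin (n + 1) => (qNumber s ((l + j + α : ℕ) : ℤ))⁻¹) *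
      (Matrix.of fun l j : Fin (n + 1) => qHilbertWeight s n α l * qHilbertWeight s n α j /
        qNumber s ((l + j + α : ℕ) : ℤ)) = 1 := by
  have hdist (i j : Fin (n + 1)) (hij : i ≠ j) : qNumber s ((i : ℤ) - (j : ℕ)) ≠ 0 :=
    qNumber_sub_ne_zero (N := n) (fun m h1 hm => hq m h1 (by omega)) i.is_le j.is_le
      (Fin.val_ne_of_ne hij)
  let p (l : Fin (n + 1)) : ℤ := (l : ℕ)
  let r (j : Fin (n + 1)) : ℤ := -((j + α : ℕ) : ℤ)
  have p_sub_r (l j : Fin (n + 1)) : p l - r j = ((l + j + α : ℕ) : ℤ) := by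
    simp only [p, r]
    omega
  have r_sub_r (i j : Fin (n + 1)) : r i - r j = ((j : ℕ) : ℤ) - (i : ℕ) := by
    simp only [r]
    omega
  have cauchy := (isPlucker_qNumber_sub hs).cauchy_mul_inv_eq_one (p := p) (r := r)
    (fun l j => by rw [p_sub_r]; exact hq _ (by omega) (by omega)) hdist
    fun i j hij => by simpa only [r_sub_r] using hdist j i hij.symm
  have weight (k : Fin (n + 1)) := prod_div_prod_erase_eq_qHilbertWeight hα k
    (qFactorial_ne_zero hq (by omega))
  simp only [p_sub_r, r_sub_r] at cauchy
  convert cauchy using 3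
  ext j k
  simp only [← weight, add_comm (k : ℕ), p]
  ring

theorem qHilbert_inv_entry_eq (hα : 1 ≤ α)
    (hq : ∀ m : ℕ, 1 ≤ m → m ≤ 2 * n + α → qNumber s m ≠ 0) {l j : ℕ} (hl : l ≤ n) (hj : j ≤ n) :
    (-1) ^ (l + j) * (qNumber s ((l + j + α : ℕ) : ℤ) / qNumber s α) *
        (qChoose s (n + l + α) (n - j) * qChoose s (n + j + α) (n - l) *
          qChoose s (l + j + α - 1) l * qChoose s (l + j + α - 1) j) =
      qHilbertWeight s n α l * qHilbertWeight s n α j /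
        qNumber s ((l + j + α : ℕ) : ℤ) / qNumber s α := by
  have hfac {m : ℕ} (hm : m ≤ 2 * n + α) : qFactorial s m ≠ 0 := qFactorial_ne_zero hq hm
  have choose_eq {m : ℕ} (a b : ℕ) (hm : m = a + b) (ha : a ≤ 2 * n + α) :
      qChoose s m b = qFactorial s m / (qFactorial s a * qFactorial s b) :=
    hm ▸ qChoose_add_right (hfac ha) b
  set N := l + j + α
  have hsucc : qFactorial s N = qFactorial s (N - 1) * qNumber s N := by
    rw [← Nat.sub_add_cancel (show 1 ≤ N by omega), qFactorial_succ, Nat.add_sub_cancel]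
  have cancel : qNumber s N * (qFactorial s N)⁻¹ ^ 2 * qFactorial s (N - 1) ^ 2 =
      (qNumber s N)⁻¹ := by
    have hpred := hfac (m := N - 1) (by omega)
    have hlast := hq N (by omega) (by omega)
    rw [hsucc]
    field_simp
  rw [choose_eq N (n - j) (by omega) (by omega), choose_eq N (n - l) (by omega) (by omega),
    choose_eq (j + α - 1) l (by omega) (by omega), choose_eq (l + α - 1) j (by omega) (by omega)]
  calc
    _ = qHilbertWeight s n α l * qHilbertWeight s n α j / qNumber s α *
        (qNumber s N * (qFactorial s N)⁻¹ ^ 2 * qFactorial s (N - 1) ^ 2) := by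
      rw [qHilbertWeight, qHilbertWeight]
      ring
    _ = _ := by rw [cancel, ← div_eq_mul_inv, div_right_comm]

end Quantum

theorem inverse_quantum_Hilbert_general {K : Type*} [Field K] (s : K) (hs0 : s ≠ 0) (n α : ℕ)
    (hα : 1 ≤ α) (hroot : ∀ m : ℕ, 1 ≤ m → m ≤ 2 * n + α → (s ^ 2) ^ m ≠ 1)
    (H B : Matrix (Fin (n + 1)) (Fin (n + 1)) K)
    (hH : ∀ l j : Fin (n + 1), H l j = qNumber s α / qNumber s ((l + j + α : ℕ) : ℤ))
    (hB : ∀ l j : Fin (n + 1), B l j =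
      (-1) ^ ((l : ℕ) + j) * (qNumber s ((l + j + α : ℕ) : ℤ) / qNumber s α) *
        (qChoose s (n + l + α) (n - j) * qChoose s (n + j + α) (n - l) *
          qChoose s (l + j + α - 1) l * qChoose s (l + j + α - 1) j)) :
    H * B = 1 ∧ B * H = 1 := by
  have hs2 : s ^ 2 ≠ 1 := by simpa using hroot 1 le_rfl (by omega)
  have hq (m : ℕ) (h1 : 1 ≤ m) (hm : m ≤ 2 * n + α) : qNumber s m ≠ 0 :=
    qNumber_ne_zero hs0 hs2 (hroot m h1 hm)
  have hα0 : qNumber s α ≠ 0 := hq α hα (by omega)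
  have hHB : H * B = 1 := by
    rw [← qHilbert_mul_inv_eq_one hs0 hα hq]
    ext l j
    simp only [Matrix.mul_apply, Matrix.of_apply, hH, hB]
    refine sum_congr rfl fun k _ => ?_
    rw [qHilbert_inv_entry_eq hα hq k.is_le j.is_le, mul_comm, div_mul_div_cancel₀ hα0,
      inv_mul_eq_div]
  exact ⟨hHB, mul_eq_one_comm.mp hHB⟩

theorem qint_eq_qNumber (s : ℂ) (m : ℕ) : qint s m = qNumber s m := by
  rw [qint, qNumber, zpow_neg, zpow_natCast, inv_pow]

theorem qbinom_eq_qChoose (s : ℂ) (m k : ℕ) : qbinom s m k = qChoose s m k := by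
  simp only [qbinom, qChoose, qint_eq_qNumber]

theorem inverse_quantum_Hilbert (s : ℂ) (hs0 : s ≠ 0) (n α : ℕ) (hα : 1 ≤ α)
    (hroot : ∀ m : ℕ, 1 ≤ m → m ≤ 2 * n + α → (s ^ 2) ^ m ≠ 1)
    (H B : Matrix (Fin (n + 1)) (Fin (n + 1)) ℂ)
    (hH : ∀ l j : Fin (n + 1), H l j = qint s α / qint s ((l : ℕ) + (j : ℕ) + α))
    (hB : ∀ l j : Fin (n + 1), B l j =
      (-1 : ℂ) ^ ((l : ℕ) + (j : ℕ)) * (qint s ((l : ℕ) + (j : ℕ) + α) / qint s α) *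
        (qbinom s (n + (l : ℕ) + α) (n - (j : ℕ)) * qbinom s (n + (j : ℕ) + α) (n - (l : ℕ)) *
          qbinom s ((l : ℕ) + (j : ℕ) + α - 1) (l : ℕ) *
          qbinom s ((l : ℕ) + (j : ℕ) + α - 1) (j : ℕ))) :
    H * B = 1 ∧ B * H = 1 := by
  simp only [qint_eq_qNumber, qbinom_eq_qChoose] at hH hB
  exact inverse_quantum_Hilbert_general s hs0 n α hα hroot H B hH hB
end

section
/- The inverse of the matrix A = (1/F_{l+j+α}(θ))_{0≤l,j≤n} has (l,j)-entry (−1)^{n(l+j+α) − C(l,2) − C(j,2)} F_{l+j+α}(θ) (n+l+α choose n−j)_{F(θ)} (n+j+α choose n−l)_{F(θ)} (l+j+α−1 choose l)_{F(θ)} (l+j+α−1 choose j)_{F(θ)}, where C(m,2) = m(m−1)/2. -/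
noncomputable def genFib (θ : ℝ) (m : ℕ) : ℝ :=
  (Real.exp (m * θ) - (-1 : ℝ) ^ m * Real.exp (-(m * θ))) / (Real.exp θ + Real.exp (-θ))

noncomputable def fibinom (θ : ℝ) (n k : ℕ) : ℝ :=
  ∏ j ∈ Finset.range k, genFib θ (n - j) / genFib θ (j + 1)

open Finset

/-!
The terms of a Lucas sequence `U` are `2 × 2` determinants: `U (l + m)` is the determinant of two
vectors built from consecutive terms, one depending on `l` and one on `m`. Hence the matrix with
entries `1 / U (l + j + α)` is a Cauchy matrix in homogeneous coordinates, whose inverse is known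
in closed form by Lagrange interpolation. The factors of that inverse are again terms of `U` up to
powers of `Q`, and they assemble into the binomial coefficients of the sequence.
-/

section Cauchy

variable {K : Type*} [Field K] {ι κ : Type*} [DecidableEq ι]

/-- The determinant of the `2 × 2` matrix with rows `u` and `v`. It plays the role of the
difference `x - y` in homogeneous versions of Lagrange interpolation and of Cauchy matrices. -/
def wedge (u v : K × K) : K := u.1 * v.2 - u.2 * v.1

theorem wedge_self (u : K × K) : wedge u u = 0 := by
  unfold wedge; ring

theorem neg_wedge (u v : K × K) : -wedge u v = wedge v u := by
  unfold wedge; ring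

theorem wedge_mul_wedge (u v w z : K × K) :
    wedge u z * wedge v w = wedge u v * wedge z w - wedge u w * wedge z v := by
  unfold wedge; ring

/-- The homogeneous Lagrange basis: the form of degree `#s - 1` on `K²` that takes the value `1` at
the node `b k` and vanishes at the nodes `b m`, `m ∈ s`, `m ≠ k`. -/
def lagrangeForm (b : ι → K × K) (s : Finset ι) (k : ι) (z : K × K) : K :=
  ∏ m ∈ s.erase k, wedge z (b m) / wedge (b k) (b m)

theorem lagrangeForm_insert_self (b : ι → K × K) {s : Finset ι} {p : ι} (hp : p ∉ s) (z : K × K) :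
    lagrangeForm b (insert p s) p z = ∏ m ∈ s, wedge z (b m) / wedge (b p) (b m) := by
  rw [lagrangeForm, erase_insert hp]

theorem lagrangeForm_insert_of_mem (b : ι → K × K) {s : Finset ι} {k p : ι} (hp : p ∉ s)
    (hk : k ∈ s) (z : K × K) :
    lagrangeForm b (insert p s) k z =
      wedge z (b p) / wedge (b k) (b p) * lagrangeForm b s k z := by
  rw [lagrangeForm, erase_insert_of_ne (ne_of_mem_of_not_mem hk hp).symm,
    prod_insert fun h ↦ hp (mem_of_mem_erase h), lagrangeForm]

theorem wedge_mul_lagrangeForm {b : ι → K × K} {s : Finset ι} {k p : ι} (hp : p ∉ s) (hk : k ∈ s)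
    (hb : ∀ m ∈ s, wedge (b m) (b p) ≠ 0) (u z : K × K) :
    wedge u z * lagrangeForm b s k z = wedge u (b k) * lagrangeForm b (insert p s) k z +
      wedge u (b p) * lagrangeForm b s k (b p) * lagrangeForm b (insert p s) p z := by
  have hbp : ∀ m ∈ s, wedge (b p) (b m) ≠ 0 := fun m hm ↦ by
    rw [← neg_wedge]; exact neg_ne_zero.2 (hb m hm)
  have hprod : lagrangeForm b s k (b p) * lagrangeForm b (insert p s) p z =
      wedge z (b k) / wedge (b p) (b k) * lagrangeForm b s k z := by
    rw [lagrangeForm_insert_self b hp, ← mul_prod_erase s _ hk, mul_left_comm]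
    unfold lagrangeForm
    rw [← prod_mul_distrib]
    congr 1
    refine prod_congr rfl fun m hm ↦ ?_
    rw [mul_comm, div_mul_div_cancel₀ (hbp m (mem_of_mem_erase hm))]
  rw [mul_assoc (wedge u (b p)), hprod, lagrangeForm_insert_of_mem b hp hk, ← neg_wedge (b k) (b p)]
  have hkp := hb k hk
  field_simp
  linear_combination lagrangeForm b s k z * wedge_mul_wedge u (b k) (b p) z

theorem prod_wedge_eq_sum_lagrangeForm (a : κ → K × K) {b : ι → K × K} {t : Finset κ}
    {s : Finset ι} (hst : #s = #t + 1)
    (hb : (s : Set ι).Pairwise fun k m ↦ wedge (b k) (b m) ≠ 0) (z : K × K) :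
    ∏ i ∈ t, wedge (a i) z = ∑ k ∈ s, (∏ i ∈ t, wedge (a i) (b k)) * lagrangeForm b s k z := by
  induction t using Finset.cons_induction generalizing s z with
  | empty =>
    obtain ⟨k, rfl⟩ := card_eq_one.1 hst
    simp [lagrangeForm]
  | cons q t hq ih =>
    rw [card_cons] at hst
    obtain ⟨p, s, hp, rfl, hs⟩ := card_eq_succ.1 hst
    rw [coe_insert] at hb
    have hbs := hb.mono (Set.subset_insert p s)
    have hbp : ∀ m ∈ s, wedge (b m) (b p) ≠ 0 := fun m hm ↦
      hb (Set.mem_insert_of_mem p hm) (Set.mem_insert p s) (ne_of_mem_of_not_mem hm hp)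
    simp only [prod_cons]
    rw [sum_insert hp, ih hs hbs z, ih hs hbs (b p), mul_sum, mul_sum, sum_mul,
      ← sum_add_distrib]
    refine sum_congr rfl fun k hk ↦ ?_
    rw [mul_left_comm, wedge_mul_lagrangeForm hp hk hbp]
    ring

/-- The homogeneous Cauchy matrix of two families of vectors; `a i = (x i, 1)` and `b j = (y j, 1)`
give the usual entries `1 / (x i - y j)`. -/
def cauchyMatrix (a b : ι → K × K) : Matrix ι ι K :=
  Matrix.of fun i j ↦ 1 / wedge (a i) (b j)

/-- The explicit inverse of `cauchyMatrix a b`, for families without parallel vectors. The `k`-th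
column of `cauchyMatrix a b` belongs to `b k`, hence so does the `k`-th row here. -/
def cauchyInverse [Fintype ι] (a b : ι → K × K) : Matrix ι ι K :=
  Matrix.of fun k j ↦ (∏ m, wedge (a m) (b k)) * (∏ m, wedge (a j) (b m)) /
    (wedge (a j) (b k) * (∏ m ∈ univ.erase k, wedge (b k) (b m)) *
      ∏ m ∈ univ.erase j, wedge (a m) (a j))

theorem cauchyMatrix_mul_cauchyInverse [Fintype ι] {a b : ι → K × K}
    (hab : ∀ i j, wedge (a i) (b j) ≠ 0) (ha : Pairwise fun i j ↦ wedge (a i) (a j) ≠ 0)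
    (hb : Pairwise fun i j ↦ wedge (b i) (b j) ≠ 0) :
    cauchyMatrix a b * cauchyInverse a b = 1 := by
  ext l j
  have hcard : #(univ : Finset ι) = #(univ.erase l) + 1 :=
    (card_erase_add_one (mem_univ l)).symm
  have hnode : ∏ m ∈ univ.erase j, wedge (a m) (a j) ≠ 0 :=
    prod_ne_zero_iff.2 fun m hm ↦ ha (ne_of_mem_erase hm)
  have hvalue : ∏ m ∈ univ.erase l, wedge (a m) (a j) =
      (1 : Matrix ι ι K) l j * ∏ m ∈ univ.erase j, wedge (a m) (a j) := by
    rcases eq_or_ne l j with rfl | hlj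
    · rw [Matrix.one_apply_eq, one_mul]
    · rw [Matrix.one_apply_ne hlj, zero_mul]
      exact prod_eq_zero (mem_erase.2 ⟨hlj.symm, mem_univ j⟩) (wedge_self _)
  rw [Matrix.mul_apply, ← mul_left_inj' hnode, ← hvalue, sum_mul,
    prod_wedge_eq_sum_lagrangeForm a hcard (hb.set_pairwise _)]
  refine sum_congr rfl fun k _ ↦ ?_
  rw [cauchyMatrix, cauchyInverse, Matrix.of_apply, Matrix.of_apply, lagrangeForm, prod_div_distrib,
    ← mul_prod_erase univ (fun m ↦ wedge (a m) (b k)) (mem_univ l),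
    ← mul_prod_erase univ (fun m ↦ wedge (a j) (b m)) (mem_univ k)]
  have hlk := hab l k
  have hjk := hab j k
  field_simp

end Cauchy

section Lucas

theorem prod_fin_erase {M : Type*} [CommMonoid M] {n : ℕ} (k : Fin (n + 1)) (f : ℕ → M) :
    ∏ m ∈ univ.erase k, f m = (∏ i ∈ range k, f i) * ∏ i ∈ range (n - k), f (k + 1 + i) := by
  have hrange : (univ.erase k).map Fin.valEmbedding = range k ∪ Ico (k + 1 : ℕ) (n + 1) := by
    ext i
    simp only [map_erase, Fin.map_valEmbedding_univ, mem_erase, mem_Iio, mem_union, mem_range,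
      mem_Ico, Fin.valEmbedding_apply]
    lia
  have hdisj : Disjoint (range k) (Ico (k + 1 : ℕ) (n + 1)) :=
    disjoint_left.2 fun i hi ↦ by simp only [mem_range, mem_Ico] at hi ⊢; lia
  rw [← Nat.add_sub_add_right n 1 k, ← prod_Ico_eq_prod_range, ← prod_union hdisj, ← hrange,
    prod_map]
  rfl

theorem prod_fin_erase_const_mul {M : Type*} [CommMonoid M] {n : ℕ} (k : Fin (n + 1)) (c : M)
    (f : Fin (n + 1) → M) : ∏ m ∈ univ.erase k, c * f m = c ^ n * ∏ m ∈ univ.erase k, f m := by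
  rw [prod_mul_distrib, prod_const, card_erase_of_mem (mem_univ k), card_fin, Nat.add_sub_cancel]

theorem neg_one_pow_mul_pow_choose_two_mul_pow {K : Type*} [Field K] {Q : K} (hQ : Q ≠ 0)
    {n k : ℕ} (hk : k ≤ n) :
    (-1) ^ k * Q ^ k.choose 2 * (Q ^ k) ^ (n - k) =
      ((-Q) ^ k)⁻¹ * Q ^ ((n * k : ℤ) - k.choose 2) := by
  obtain ⟨r, rfl⟩ := Nat.exists_eq_add_of_le hk
  have hchoose : k.choose 2 + k.choose 2 + k = k * k := by
    rw [← mul_two, Nat.choose_two_right, Nat.div_mul_cancel (Nat.even_mul_pred_self k).two_dvd,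
      Nat.mul_sub_one, Nat.sub_add_cancel (Nat.le_mul_self k)]
  have hsq : Q ^ k.choose 2 * Q ^ k.choose 2 * Q ^ k = Q ^ (k * k) := by
    rw [← pow_add, ← pow_add, hchoose]
  have hsign : ((-1 : K) ^ k) ^ 2 = 1 := by rw [← pow_mul, mul_comm, pow_mul, neg_one_sq, one_pow]
  rw [zpow_sub₀ hQ, zpow_natCast, ← Nat.cast_mul, zpow_natCast, Nat.add_sub_cancel_left,
    neg_pow Q, ← pow_mul, add_mul, pow_add, ← hsq, mul_comm r k]
  field_simp
  exact hsign

/-- `U` is the Lucas sequence of the first kind with parameters `P` and `Q`. The parameters `1` and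
`-1` give the Fibonacci numbers, `2` and `1` the sequence `U m = m` of the Hilbert matrix. -/
structure IsLucas {R : Type*} [CommRing R] (P Q : R) (U : ℕ → R) : Prop where
  zero : U 0 = 0
  one : U 1 = 1
  add_two (m : ℕ) : U (m + 2) = P * U (m + 1) - Q * U m

theorem IsLucas.add {R : Type*} [CommRing R] {P Q : R} {U : ℕ → R} (hU : IsLucas P Q U)
    (m n : ℕ) :
    U (m + n) = U m * U (n + 1) + U (m + 1) * U n - P * U m * U n := by
  induction m using Nat.twoStepInduction with
  | zero => rw [hU.zero, hU.one, zero_add]; ring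
  | one => rw [hU.add_two, hU.zero, hU.one, add_comm 1 n]; ring
  | more m ih ih' =>
    rw [show m + 2 + n = m + n + 2 by ring, hU.add_two, show m + n + 1 = m + 1 + n by ring, ih, ih',
      hU.add_two (m + 1), hU.add_two m]
    ring

variable {K : Type*} [Field K]

/-- Pairs of consecutive terms of `U`: the vectors whose wedge products are again terms of `U`. -/
def lucasPoint (U : ℕ → K) (m : ℕ) : K × K := (U m, U (m + 1))

/-- The vector with which `lucasPoint U l` has wedge product `U (l + m)`. -/
def lucasCopoint (P : K) (U : ℕ → K) (m : ℕ) : K × K := (-U m, U (m + 1) - P * U m)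

/-- The analogue `U 1 * ⋯ * U n` of the factorial for the sequence `U`. -/
def seqFactorial (U : ℕ → K) (n : ℕ) : K := ∏ i ∈ range n, U (i + 1)

/-- The analogue of the binomial coefficient for the sequence `U`, as in `fibinom`. The subtraction
is truncated, so the value is meaningful for `k ≤ n`. -/
def fibonomial (U : ℕ → K) (n k : ℕ) : K := ∏ j ∈ range k, U (n - j) / U (j + 1)

theorem fibonomial_add_eq_div (U : ℕ → K) (r k : ℕ) :
    fibonomial U (r + k) k = (∏ i ∈ range k, U (r + i + 1)) / seqFactorial U k := by
  rw [fibonomial, prod_div_distrib, ← prod_range_reflect, seqFactorial]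
  congr 1
  refine prod_congr rfl fun i hi ↦ congrArg U ?_
  have := mem_range.1 hi
  lia

theorem fibonomial_mul_fibonomial (U : ℕ → K) {n j α : ℕ} (hj : j ≤ n) (hα : α ≠ 0) (k : ℕ) :
    fibonomial U (n + k + α) (n - j) * U (k + j + α) * fibonomial U (k + j + α - 1) j =
      (∏ i ∈ range (n + 1), U (i + (k + α))) / (seqFactorial U j * seqFactorial U (n - j)) := by
  obtain ⟨r, rfl⟩ := Nat.exists_eq_add_of_le hj
  obtain ⟨c, rfl⟩ := Nat.exists_eq_add_one_of_ne_zero hα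
  have hsplit : ∏ i ∈ range (j + r + 1), U (i + (k + (c + 1))) =
      (∏ i ∈ range j, U (k + c + i + 1)) *
        (U (k + j + (c + 1)) * ∏ i ∈ range r, U (k + j + (c + 1) + i + 1)) := by
    rw [add_assoc j, prod_range_add, prod_range_succ', mul_comm _ (U _)]
    exact congr_arg₂ _ (prod_congr rfl fun i _ ↦ congrArg U (by lia))
      (congr_arg₂ _ (congrArg U (by lia)) (prod_congr rfl fun i _ ↦ congrArg U (by lia)))
  rw [hsplit, Nat.add_sub_cancel_left, show j + r + k + (c + 1) = k + j + (c + 1) + r by lia,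
    show k + j + (c + 1) - 1 = k + c + j by lia, fibonomial_add_eq_div, fibonomial_add_eq_div]
  ring

theorem wedge_lucasCopoint (P : K) (U : ℕ → K) (m n : ℕ) :
    wedge (lucasCopoint P U m) (lucasCopoint P U n) = wedge (lucasPoint U n) (lucasPoint U m) := by
  simp only [wedge, lucasPoint, lucasCopoint]; ring

namespace IsLucas

variable {P Q : K} {U : ℕ → K}

theorem wedge_lucasPoint_lucasCopoint (hU : IsLucas P Q U) (l m : ℕ) :
    wedge (lucasPoint U l) (lucasCopoint P U m) = U (l + m) := by
  rw [hU.add]; simp only [wedge, lucasPoint, lucasCopoint]; ring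

theorem wedge_lucasPoint_add_add (hU : IsLucas P Q U) (m n d : ℕ) :
    wedge (lucasPoint U (m + d)) (lucasPoint U (n + d)) =
      Q ^ d * wedge (lucasPoint U m) (lucasPoint U n) := by
  induction d with
  | zero => simp
  | succ d ih =>
    rw [pow_succ', mul_assoc, ← ih]
    simp only [wedge, lucasPoint, ← add_assoc, hU.add_two]
    ring

theorem wedge_lucasPoint_add (hU : IsLucas P Q U) (m n : ℕ) :
    wedge (lucasPoint U (m + n)) (lucasPoint U n) = Q ^ n * U m := by
  simpa [wedge, lucasPoint, hU.zero, hU.one] using hU.wedge_lucasPoint_add_add m 0 n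

theorem wedge_lucasPoint_ne_zero (hU : IsLucas P Q U) (hQ : Q ≠ 0) {n : ℕ}
    (hUn : ∀ m, 0 < m → m ≤ n → U m ≠ 0) {k m : ℕ} (hk : k ≤ n) (hm : m ≤ n) (hkm : k ≠ m) :
    wedge (lucasPoint U k) (lucasPoint U m) ≠ 0 := by
  wlog hlt : m < k generalizing k m
  · rw [← neg_wedge]
    exact neg_ne_zero.2 (this hm hk hkm.symm (by lia))
  obtain ⟨d, rfl⟩ := Nat.exists_eq_add_of_lt hlt
  rw [add_assoc, add_comm, hU.wedge_lucasPoint_add]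
  exact mul_ne_zero (pow_ne_zero m hQ) (hUn _ d.succ_pos (by lia))

theorem prod_range_wedge_lucasPoint (hU : IsLucas P Q U) (k : ℕ) :
    ∏ m ∈ range k, wedge (lucasPoint U m) (lucasPoint U k) =
      (-1) ^ k * Q ^ k.choose 2 * seqFactorial U k := by
  have hterm : ∀ m ∈ range k,
      wedge (lucasPoint U m) (lucasPoint U k) = -(Q ^ m * U (k - m)) := fun m hm ↦ by
    rw [← hU.wedge_lucasPoint_add, Nat.sub_add_cancel (mem_range.1 hm).le, neg_wedge]
  rw [prod_congr rfl hterm, prod_neg, card_range, prod_mul_distrib, prod_pow_eq_pow_sum,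
    sum_range_id, ← Nat.choose_two_right, mul_assoc, seqFactorial,
    ← prod_range_reflect (fun i ↦ U (i + 1))]
  refine congrArg _ (congrArg _ (prod_congr rfl fun m hm ↦ congrArg U ?_))
  have := mem_range.1 hm
  lia

theorem prod_range_wedge_lucasPoint_add (hU : IsLucas P Q U) (k r : ℕ) :
    ∏ i ∈ range r, wedge (lucasPoint U (k + 1 + i)) (lucasPoint U k) =
      (Q ^ k) ^ r * seqFactorial U r := by
  have hterm (i : ℕ) : wedge (lucasPoint U (k + 1 + i)) (lucasPoint U k) = Q ^ k * U (i + 1) := by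
    rw [← hU.wedge_lucasPoint_add, show k + 1 + i = i + 1 + k by ring]
  rw [prod_congr rfl fun i _ ↦ hterm i, prod_mul_distrib, prod_const, card_range, seqFactorial]

theorem prod_erase_wedge_lucasPoint (hU : IsLucas P Q U) (hQ : Q ≠ 0) {n : ℕ} (k : Fin (n + 1)) :
    ∏ m ∈ univ.erase k, wedge (lucasPoint U m) (lucasPoint U k) =
      ((-Q) ^ (k : ℕ))⁻¹ * Q ^ ((n * k : ℤ) - (k : ℕ).choose 2) *
        (seqFactorial U k * seqFactorial U (n - k)) := by
  rw [prod_fin_erase k fun m ↦ wedge (lucasPoint U m) (lucasPoint U k),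
    hU.prod_range_wedge_lucasPoint, hU.prod_range_wedge_lucasPoint_add, mul_mul_mul_comm,
    neg_one_pow_mul_pow_choose_two_mul_pow hQ k.is_le]

theorem prod_erase_wedge_lucasCopoint (hU : IsLucas P Q U) {n : ℕ} (k : Fin (n + 1)) (α : ℕ) :
    ∏ m ∈ univ.erase k, wedge (lucasCopoint P U (k + α)) (lucasCopoint P U (m + α)) =
      (Q ^ α) ^ n * ∏ m ∈ univ.erase k, wedge (lucasPoint U m) (lucasPoint U k) := by
  rw [← prod_fin_erase_const_mul]
  exact prod_congr rfl fun m _ ↦ by rw [wedge_lucasCopoint, hU.wedge_lucasPoint_add_add]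

theorem cauchyInverse_apply (hU : IsLucas P Q U) (hQ : Q ≠ 0) {n α : ℕ} (hα : α ≠ 0)
    {k j : Fin (n + 1)} (hkj : U (k + j + α) ≠ 0) :
    cauchyInverse (fun l : Fin (n + 1) ↦ lucasPoint U l)
        (fun m : Fin (n + 1) ↦ lucasCopoint P U (m + α)) k j =
      (-Q) ^ (k + j : ℕ) * Q⁻¹ ^ ((n * (k + j + α) : ℤ) - (k : ℕ).choose 2 - (j : ℕ).choose 2) *
        U (k + j + α) *
        (fibonomial U (n + k + α) (n - j) * fibonomial U (n + j + α) (n - k) *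
          fibonomial U (k + j + α - 1) k * fibonomial U (k + j + α - 1) j) := by
  have hQpow : Q⁻¹ ^ ((n * (k + j + α) : ℤ) - (k : ℕ).choose 2 - (j : ℕ).choose 2) =
      ((Q ^ α) ^ n * Q ^ ((n * k : ℤ) - (k : ℕ).choose 2) *
        Q ^ ((n * j : ℤ) - (j : ℕ).choose 2))⁻¹ := by
    rw [inv_zpow, ← pow_mul, ← zpow_natCast, ← zpow_add₀ hQ, ← zpow_add₀ hQ]
    push_cast
    ring_nf
  have hk := fibonomial_mul_fibonomial U j.is_le hα k
  have hj := fibonomial_mul_fibonomial U k.is_le hα j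
  rw [add_comm (j : ℕ) k] at hj
  rw [cauchyInverse, Matrix.of_apply, hU.prod_erase_wedge_lucasCopoint,
    hU.prod_erase_wedge_lucasPoint hQ, hU.prod_erase_wedge_lucasPoint hQ, hQpow]
  simp only [hU.wedge_lucasPoint_lucasCopoint, add_left_comm (j : ℕ)]
  rw [Fin.prod_univ_eq_prod_range (fun i ↦ U (i + (k + α))) (n + 1),
    Fin.prod_univ_eq_prod_range (fun i ↦ U (i + (j + α))) (n + 1)]
  calc
    _ = (-Q) ^ (k + j : ℕ) * ((Q ^ α) ^ n * Q ^ ((n * k : ℤ) - (k : ℕ).choose 2) *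
          Q ^ ((n * j : ℤ) - (j : ℕ).choose 2))⁻¹ * (U (k + j + α))⁻¹ *
        ((∏ i ∈ range (n + 1), U (i + (k + α))) / (seqFactorial U j * seqFactorial U (n - j)) *
        ((∏ i ∈ range (n + 1), U (i + (j + α))) /
          (seqFactorial U k * seqFactorial U (n - k)))) := by
      rw [add_assoc (k : ℕ)]
      simp only [div_eq_mul_inv, mul_inv, inv_inv, pow_add]
      ring
    _ = _ := by
      rw [← hk, ← hj]
      field_simp

end IsLucas
end Lucas

theorem inverse_generalized_Filbert_general {K : Type*} [Field K] {P Q : K} {U : ℕ → K}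
    (hU : IsLucas P Q U) (hQ : Q ≠ 0) {n α : ℕ} (hUn : ∀ m, 0 < m → m ≤ n → U m ≠ 0)
    (hUα : ∀ m ≤ 2 * n, U (m + α) ≠ 0) {A B : Matrix (Fin (n + 1)) (Fin (n + 1)) K}
    (hA : ∀ l j : Fin (n + 1), A l j = 1 / U (l + j + α))
    (hB : ∀ l j : Fin (n + 1), B l j =
      (-Q) ^ (l + j : ℕ) * Q⁻¹ ^ ((n * (l + j + α) : ℤ) - (l : ℕ).choose 2 - (j : ℕ).choose 2) *
        U (l + j + α) *
        (fibonomial U (n + l + α) (n - j) * fibonomial U (n + j + α) (n - l) *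
          fibonomial U (l + j + α - 1) l * fibonomial U (l + j + α - 1) j)) :
    A * B = 1 ∧ B * A = 1 := by
  have hα : α ≠ 0 := fun h ↦ hUα 0 (Nat.zero_le _) (by rw [h, hU.zero])
  have hentry (l j : Fin (n + 1)) : U (l + j + α) ≠ 0 := hUα (l + j) (by lia)
  have hpoint : Pairwise fun l m : Fin (n + 1) ↦ wedge (lucasPoint U l) (lucasPoint U m) ≠ 0 :=
    fun l m hlm ↦ hU.wedge_lucasPoint_ne_zero hQ hUn l.is_le m.is_le (Fin.val_ne_of_ne hlm)
  have hAC : A = cauchyMatrix (fun l : Fin (n + 1) ↦ lucasPoint U l)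
      (fun m : Fin (n + 1) ↦ lucasCopoint P U (m + α)) := by
    ext l j
    rw [hA, cauchyMatrix, Matrix.of_apply, hU.wedge_lucasPoint_lucasCopoint, add_assoc]
  have hBC : B = cauchyInverse (fun l : Fin (n + 1) ↦ lucasPoint U l)
      (fun m : Fin (n + 1) ↦ lucasCopoint P U (m + α)) := by
    ext l j
    rw [hB, hU.cauchyInverse_apply hQ hα (hentry l j)]
  have hAB : A * B = 1 := by
    rw [hAC, hBC]
    refine cauchyMatrix_mul_cauchyInverse (fun l j ↦ ?_) hpoint fun l m hlm ↦ ?_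
    · rw [hU.wedge_lucasPoint_lucasCopoint, ← add_assoc]
      exact hentry l j
    · beta_reduce
      rw [wedge_lucasCopoint, hU.wedge_lucasPoint_add_add]
      exact mul_ne_zero (pow_ne_zero α hQ) (hpoint hlm.symm)
  exact ⟨hAB, mul_eq_one_comm.1 hAB⟩

theorem isLucas_genFib (θ : ℝ) : IsLucas (Real.exp θ - Real.exp (-θ)) (-1) (genFib θ) where
  zero := by simp [genFib]
  one := by
    have h : Real.exp θ + Real.exp (-θ) ≠ 0 := by positivity
    simp [genFib, h]
  add_two m := by
    have hinv : Real.exp θ * Real.exp (-θ) = 1 := by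
      rw [← Real.exp_add, add_neg_cancel, Real.exp_zero]
    simp only [genFib, ← mul_neg, Real.exp_nat_mul]
    rw [← mul_div_assoc, neg_one_mul, sub_neg_eq_add, ← add_div]
    congr 1
    linear_combination (Real.exp θ ^ m - (-1) ^ m * Real.exp (-θ) ^ m) * hinv

theorem fibinom_eq_fibonomial (θ : ℝ) : fibinom θ = fibonomial (genFib θ) := rfl

theorem genFib_ne_zero {θ : ℝ} (hθ : θ ≠ 0) {m : ℕ} (hm : m ≠ 0) : genFib θ m ≠ 0 := by
  have hden : Real.exp θ + Real.exp (-θ) ≠ 0 := by positivity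
  refine div_ne_zero (fun h ↦ ?_) hden
  have habs := congrArg abs (sub_eq_zero.1 h)
  rw [abs_mul, abs_neg_one_pow, one_mul, Real.abs_exp, Real.abs_exp, Real.exp_eq_exp,
    self_eq_neg, mul_eq_zero, Nat.cast_eq_zero] at habs
  exact habs.elim hm hθ

theorem intCast_choose_two (m : ℕ) : (m.choose 2 : ℤ) = m * (m - 1) / 2 := by
  rcases m with _ | m
  · rfl
  · simp [Nat.choose_two_right]

theorem inverse_generalized_Filbert (θ : ℝ) (hθ : 0 < θ) (n α : ℕ) (hα : 1 ≤ α)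
    (A B : Matrix (Fin (n + 1)) (Fin (n + 1)) ℝ)
    (hA : ∀ l j : Fin (n + 1), A l j = 1 / genFib θ ((l : ℕ) + (j : ℕ) + α))
    (hB : ∀ l j : Fin (n + 1), B l j =
      (-1 : ℝ) ^ ((n * ((l : ℕ) + (j : ℕ) + α) : ℤ) - (l : ℕ) * ((l : ℕ) - 1) / 2 -
          (j : ℕ) * ((j : ℕ) - 1) / 2) *
        genFib θ ((l : ℕ) + (j : ℕ) + α) *
        (fibinom θ (n + (l : ℕ) + α) (n - (j : ℕ)) * fibinom θ (n + (j : ℕ) + α) (n - (l : ℕ)) *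
          fibinom θ ((l : ℕ) + (j : ℕ) + α - 1) (l : ℕ) *
          fibinom θ ((l : ℕ) + (j : ℕ) + α - 1) (j : ℕ))) :
    A * B = 1 ∧ B * A = 1 :=
  inverse_generalized_Filbert_general (isLucas_genFib θ) (by norm_num)
    (fun m hm _ ↦ genFib_ne_zero hθ.ne' hm.ne') (fun m _ ↦ genFib_ne_zero hθ.ne' (by lia)) hA
    fun l j ↦ by simpa [intCast_choose_two, inv_neg, fibinom_eq_fibonomial] using hB l j
end
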